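/- arXiv:1009.0216 — 2 statements merged into one kernel-verified Lean document; each statement's English description precedes it below -/
import Mathlib

section
/- Let k ≥ 1 and let G be a finite simple graph admitting a k-trapezoid model: maps lᵢ, rᵢ : V(G) → ℝ for each i ∈ {1, …, k} with lᵢ(v) ≤ rᵢ(v) for all v and i, such that two distinct vertices u, v are adjacent if and only if neither (rᵢ(u) < lᵢ(v) for all i) nor (rᵢ(v) < lᵢ(u) for all i) holds. Then for every t ∈ ℝ, setting A = {v ∈ V(G) : maxᵢ rᵢ(v) < t}, every nonempty subset S ⊆ A has a subset S' ⊆ S with |S'| ≤ k and N(S) ∩ (V(G) ∖ A) = N(S') ∩ (V(G) ∖ A); consequently the cut-neighbourhood family of A has at most 1 + ∑_{i=1}^{k} C(|A|, i) elements. (This witnesses that every n-vertex k-trapezoid graph has boolean-width at most k·log₂ n.) -/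
/-- `nbhds G X` is `N(X)`, the union of the open neighbourhoods of the vertices of `X`. -/
def nbhds {V : Type*} (G : SimpleGraph V) (X : Set V) : Set V :=
  {v | ∃ x ∈ X, G.Adj x v}

/-- The cut-neighbourhood family of `A`: `{N(X) ∩ (V ∖ A) : X ⊆ A}`. -/
def cutNbhdFamily {V : Type*} (G : SimpleGraph V) (A : Set V) : Set (Set V) :=
  {S | ∃ X ⊆ A, S = nbhds G X ∩ Aᶜ}

/-!
Let `u ∈ A` and `v ∉ A`. On some line `v` ends at or after `t`, hence after `u`, so `v` is not
entirely to the left of `u`. Thus `u` and `v` are adjacent exactly when `u` is not entirely to the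
left of `v`, that is, when `lᵢ(v) ≤ rᵢ(u)` for some `i`. For each `i` only a vertex of `S`
maximising `rᵢ` matters, so choosing one per line gives the same neighbours outside `A` as `S`.
-/

/-- A trapezoid model of `G` on a family of linearly ordered lines indexed by `ι`: every vertex `v`
gets the interval `[l i v, r i v]` on line `i`, and distinct vertices are adjacent iff neither lies
strictly to the left of the other on all lines. A `k`-trapezoid graph is one with such a model for
`ι = Fin k` and every `α i = ℝ`. -/
structure IsTrapezoidModel {V ι : Type*} {α : ι → Type*} [∀ i, LinearOrder (α i)]
    (G : SimpleGraph V) (l r : ∀ i, V → α i) : Prop where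
  left_le_right : ∀ i v, l i v ≤ r i v
  adj_iff_of_ne : ∀ u v, u ≠ v → (G.Adj u v ↔ ¬(∀ i, r i u < l i v) ∧ ¬(∀ i, r i v < l i u))

theorem ncard_powerset_ncard_le {V : Type*} {A : Set V} (hA : A.Finite) (k : ℕ) :
    {X | X ⊆ A ∧ X.ncard ≤ k}.ncard = 1 + ∑ i ∈ Finset.Icc 1 k, A.ncard.choose i := by
  induction k with
  | zero => simpa using Set.ncard_powerset_ncard hA 0
  | succ k ih =>
    have hsplit : {X | X ⊆ A ∧ X.ncard ≤ k + 1} =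
        {X | X ⊆ A ∧ X.ncard ≤ k} ∪ {X | X ⊆ A ∧ X.ncard = k + 1} := by
      simp only [Nat.le_add_one_iff, and_or_left, Set.ofPred_or]
    have hdisj : Disjoint {X | X ⊆ A ∧ X.ncard ≤ k} {X | X ⊆ A ∧ X.ncard = k + 1} :=
      Set.disjoint_left.2 fun _ hle heq => (Nat.lt_add_one_of_le hle.2).ne heq.2
    rw [hsplit, Set.ncard_union_eq hdisj (hA.finite_subsets.subset fun _ h => h.1)
      (hA.finite_subsets.subset fun _ h => h.1), ih, Set.ncard_powerset_ncard hA,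
      Finset.sum_Icc_succ_top (by lia), add_assoc]

theorem exists_subset_ncard_le_card_forall_exists_le {V ι : Type*} [Finite ι] {α : ι → Type*}
    [∀ i, LinearOrder (α i)] (f : ∀ i, V → α i) {S : Set V} (hS : S.Finite) :
    ∃ S' ⊆ S, S'.ncard ≤ Nat.card ι ∧ ∀ i, ∀ x ∈ S, ∃ y ∈ S', f i x ≤ f i y := by
  obtain rfl | hne := S.eq_empty_or_nonempty
  · exact ⟨∅, subset_rfl, by simp, by simp⟩
  · choose m hmS hmax using fun i => S.exists_max_image (f i) hS hne
    exact ⟨Set.range m, Set.range_subset_iff.2 hmS, Finite.card_range_le m,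
      fun i x hx => ⟨m i, Set.mem_range_self i, hmax i x hx⟩⟩

section CutNeighbourhoods

variable {V : Type*} {G : SimpleGraph V} {A : Set V}

theorem nbhds_mono {X Y : Set V} (h : X ⊆ Y) : nbhds G X ⊆ nbhds G Y :=
  fun _ ⟨x, hx, hxv⟩ => ⟨x, h hx, hxv⟩

theorem ncard_cutNbhdFamily_le {k : ℕ} (hA : A.Finite)
    (h : ∀ X ⊆ A, ∃ X' ⊆ A, X'.ncard ≤ k ∧ nbhds G X ∩ Aᶜ = nbhds G X' ∩ Aᶜ) :
    (cutNbhdFamily G A).ncard ≤ 1 + ∑ i ∈ Finset.Icc 1 k, A.ncard.choose i := by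
  have hfin : {X | X ⊆ A ∧ X.ncard ≤ k}.Finite := hA.finite_subsets.subset fun _ hX => hX.1
  have hsub : cutNbhdFamily G A ⊆ (nbhds G · ∩ Aᶜ) '' {X | X ⊆ A ∧ X.ncard ≤ k} := by
    rintro _ ⟨X, hX, rfl⟩
    obtain ⟨X', hX', hcard, heq⟩ := h X hX
    exact ⟨X', ⟨hX', hcard⟩, heq.symm⟩
  calc (cutNbhdFamily G A).ncard
      ≤ ((nbhds G · ∩ Aᶜ) '' {X | X ⊆ A ∧ X.ncard ≤ k}).ncard :=
        Set.ncard_le_ncard hsub (hfin.image _)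
    _ ≤ {X | X ⊆ A ∧ X.ncard ≤ k}.ncard := Set.ncard_image_le hfin
    _ = 1 + ∑ i ∈ Finset.Icc 1 k, A.ncard.choose i := ncard_powerset_ncard_le hA k

theorem exists_subset_ncard_le_card_nbhds_inter_compl_eq {ι : Type*} [Finite ι] {α : ι → Type*}
    [∀ i, LinearOrder (α i)] {l r : ∀ i, V → α i}
    (hadj : ∀ u ∈ A, ∀ v ∉ A, (G.Adj u v ↔ ∃ i, l i v ≤ r i u))
    {S : Set V} (hSA : S ⊆ A) (hS : S.Finite) :
    ∃ S' ⊆ S, S'.ncard ≤ Nat.card ι ∧ nbhds G S ∩ Aᶜ = nbhds G S' ∩ Aᶜ := by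
  obtain ⟨S', hS', hcard, hdom⟩ := exists_subset_ncard_le_card_forall_exists_le r hS
  refine ⟨S', hS', hcard, Set.Subset.antisymm ?_ (Set.inter_subset_inter_left _ (nbhds_mono hS'))⟩
  rintro v ⟨⟨x, hx, hxv⟩, hv⟩
  obtain ⟨i, hi⟩ := (hadj x (hSA hx) v hv).1 hxv
  obtain ⟨y, hy, hxy⟩ := hdom i x hx
  exact ⟨⟨y, hy, (hadj y (hSA (hS' hy)) v hv).2 ⟨i, hi.trans hxy⟩⟩, hv⟩

end CutNeighbourhoods

namespace IsTrapezoidModel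

variable {V ι : Type*} {α : ι → Type*} [∀ i, LinearOrder (α i)] {G : SimpleGraph V}
  {l r : ∀ i, V → α i}

theorem adj_iff_exists_left_le_right (h : IsTrapezoidModel G l r) {u v : V} (huv : u ≠ v)
    (hr : ∃ i, r i u ≤ r i v) : G.Adj u v ↔ ∃ i, l i v ≤ r i u := by
  obtain ⟨j, hj⟩ := hr
  have hnot_left : ¬∀ i, r i v < l i u :=
    fun hlt => (hlt j).not_ge ((h.left_le_right j u).trans hj)
  rw [h.adj_iff_of_ne u v huv, and_iff_left hnot_left]
  simp only [not_forall, not_lt]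

theorem adj_iff_of_forall_right_lt (h : IsTrapezoidModel G l r) {t : ∀ i, α i} {u v : V}
    (hu : ∀ i, r i u < t i) (hv : ¬∀ i, r i v < t i) : G.Adj u v ↔ ∃ i, l i v ≤ r i u := by
  have huv : u ≠ v := by
    rintro rfl
    exact hv hu
  obtain ⟨j, hj⟩ := not_forall.1 hv
  exact h.adj_iff_exists_left_le_right huv ⟨j, (hu j).le.trans (not_lt.1 hj)⟩

end IsTrapezoidModel

theorem ktrapezoid_graph_cut_nbhds_general {V ι : Type*} [Finite ι] {α : ι → Type*}
    [∀ i, LinearOrder (α i)] {G : SimpleGraph V} {l r : ∀ i, V → α i}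
    (hG : IsTrapezoidModel G l r) (t : ∀ i, α i) (A : Set V) (hA : A = {v | ∀ i, r i v < t i})
    (hfin : A.Finite) :
    (∀ S ⊆ A, ∃ S' ⊆ S, S'.ncard ≤ Nat.card ι ∧ nbhds G S ∩ Aᶜ = nbhds G S' ∩ Aᶜ) ∧
      (cutNbhdFamily G A).ncard ≤ 1 + ∑ i ∈ Finset.Icc 1 (Nat.card ι), A.ncard.choose i := by
  have hadj : ∀ u ∈ A, ∀ v ∉ A, (G.Adj u v ↔ ∃ i, l i v ≤ r i u) := by
    subst hA
    exact fun u hu v hv => hG.adj_iff_of_forall_right_lt hu hv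
  have hrep : ∀ S ⊆ A, ∃ S' ⊆ S, S'.ncard ≤ Nat.card ι ∧ nbhds G S ∩ Aᶜ = nbhds G S' ∩ Aᶜ :=
    fun S hS => exists_subset_ncard_le_card_nbhds_inter_compl_eq hadj hS (hfin.subset hS)
  refine ⟨hrep, ncard_cutNbhdFamily_le hfin fun X hX => ?_⟩
  obtain ⟨X', hX', hX'rep⟩ := hrep X hX
  exact ⟨X', hX'.trans hX, hX'rep⟩

theorem ktrapezoid_graph_cut_nbhds {V : Type*} [Fintype V] (k : ℕ) (hk : 1 ≤ k)
    (G : SimpleGraph V)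
    (l r : Fin k → V → ℝ) (hlr : ∀ i v, l i v ≤ r i v)
    (hmodel : ∀ u v : V, u ≠ v →
      (G.Adj u v ↔ ¬(∀ i, r i u < l i v) ∧ ¬(∀ i, r i v < l i u)))
    (t : ℝ) (A : Set V) (hA : A = {v | ∀ i, r i v < t}) :
    (∀ S : Set V, S ⊆ A → S.Nonempty →
        ∃ S' ⊆ S, S'.ncard ≤ k ∧ nbhds G S ∩ Aᶜ = nbhds G S' ∩ Aᶜ) ∧
      (cutNbhdFamily G A).ncard ≤ 1 + ∑ i ∈ Finset.Icc 1 k, (A.ncard).choose i := by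
  have h := ktrapezoid_graph_cut_nbhds_general ⟨hlr, hmodel⟩ (fun _ => t) A hA A.toFinite
  exact Nat.card_fin k ▸ ⟨fun S hS _ => h.1 S hS, h.2⟩
end

section
/- Let G be a finite simple graph on n vertices and k ≥ 0, and suppose there is a linear order ≤ on V(G) such that every vertex v has at most k non-neighbours strictly greater than v (i.e. |{w ∈ V(G) : v < w and w ∉ N(v)}| ≤ k for all v); equivalently, the complement of G is k-degenerate with this elimination ordering. Then for every initial segment A of the order ≤, the cut-neighbourhood family of A has at most 1 + ∑_{i=0}^{k} C(n, i) elements. (This witnesses that the complement of every n-vertex k-degenerate graph has boolean-width at most k·log₂ n + O(1).) -/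
/-!
For nonempty `X ⊆ A`, the set `N(X) ∩ Aᶜ` is determined by its complement `Aᶜ \ N(X)` in `Aᶜ`.
The latter consists of common non-neighbours of the vertices of `X`, so it lies in `Aᶜ \ N(x)` for
any single `x ∈ X` and has at most `k` elements. There are `∑ i ≤ k, C(|Aᶜ|, i)` subsets of `Aᶜ`
with at most `k` elements, and `X = ∅` contributes the remaining `1`.
-/

theorem ncard_powerset_ncard_le_s7 {α : Type*} {s : Set α} (hs : s.Finite) (k : ℕ) :
    {t ⊆ s | t.ncard ≤ k}.ncard = ∑ i ∈ Finset.range (k + 1), s.ncard.choose i := by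
  induction k with
  | zero => simpa using Set.ncard_powerset_ncard hs 0
  | succ k ih =>
    have hfin (p : Set α → Prop) : {t ⊆ s | p t}.Finite := hs.finite_subsets.subset fun _ ht ↦ ht.1
    have hsplit : {t ⊆ s | t.ncard ≤ k + 1} =
        {t ⊆ s | t.ncard ≤ k} ∪ {t ⊆ s | t.ncard = k + 1} := by
      ext t
      simp only [Nat.le_succ_iff, Set.mem_union, Set.mem_ofPred_eq, and_or_left]
    have hdisj : Disjoint {t ⊆ s | t.ncard ≤ k} {t ⊆ s | t.ncard = k + 1} :=
      Set.disjoint_left.2 fun t hle heq ↦ (Nat.lt_succ_of_le hle.2).ne heq.2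
    rw [hsplit, Set.ncard_union_eq hdisj (hfin _) (hfin _), ih, Set.ncard_powerset_ncard hs,
      ← Finset.sum_range_succ]

section

variable {V : Type*} (G : SimpleGraph V)

theorem nbhds_empty : nbhds G ∅ = ∅ := by
  simp [nbhds]

variable {G}

theorem neighborSet_subset_nbhds {X : Set V} {x : V} (hx : x ∈ X) :
    G.neighborSet x ⊆ nbhds G X :=
  fun _ hv ↦ ⟨x, hx, hv⟩

theorem compl_sdiff_neighborSet_subset_of_isLowerSet [LinearOrder V] {A : Set V}
    (hA : IsLowerSet A) {a : V} (ha : a ∈ A) :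
    Aᶜ \ G.neighborSet a ⊆ {w | a < w ∧ ¬ G.Adj a w} :=
  fun _ hw ↦ ⟨not_le.1 fun hle ↦ hw.1 (hA hle ha), hw.2⟩

theorem cutNbhdFamily_subset {k : ℕ} {A : Set V} (hA : Aᶜ.Finite)
    (hdeg : ∀ a ∈ A, (Aᶜ \ G.neighborSet a).ncard ≤ k) :
    cutNbhdFamily G A ⊆ insert ∅ ((Aᶜ \ ·) '' {T ⊆ Aᶜ | T.ncard ≤ k}) := by
  rintro _ ⟨X, hXA, rfl⟩
  obtain rfl | ⟨x, hx⟩ := X.eq_empty_or_nonempty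
  · exact Or.inl (by rw [nbhds_empty, Set.empty_inter])
  · have hcard : (Aᶜ \ nbhds G X).ncard ≤ k :=
      (Set.ncard_le_ncard (Set.sdiff_subset_sdiff_right (neighborSet_subset_nbhds hx))
        hA.sdiff).trans (hdeg x (hXA hx))
    have hcompl : Aᶜ \ (Aᶜ \ nbhds G X) = nbhds G X ∩ Aᶜ :=
      sdiff_sdiff_right_self.trans (Set.inter_comm _ _)
    exact Or.inr ⟨Aᶜ \ nbhds G X, ⟨Set.sdiff_subset, hcard⟩, hcompl⟩

theorem complement_degenerate_cut_nbhds_general {k : ℕ} {A : Set V} (hA : Aᶜ.Finite)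
    (hdeg : ∀ a ∈ A, (Aᶜ \ G.neighborSet a).ncard ≤ k) :
    (cutNbhdFamily G A).ncard ≤ 1 + ∑ i ∈ Finset.range (k + 1), Aᶜ.ncard.choose i := by
  have hfin : {T ⊆ Aᶜ | T.ncard ≤ k}.Finite := hA.finite_subsets.subset fun _ hT ↦ hT.1
  calc (cutNbhdFamily G A).ncard
      ≤ (insert ∅ ((Aᶜ \ ·) '' {T ⊆ Aᶜ | T.ncard ≤ k})).ncard :=
        Set.ncard_le_ncard (cutNbhdFamily_subset hA hdeg) ((hfin.image _).insert _)
    _ ≤ ((Aᶜ \ ·) '' {T ⊆ Aᶜ | T.ncard ≤ k}).ncard + 1 := Set.ncard_insert_le _ _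
    _ ≤ {T ⊆ Aᶜ | T.ncard ≤ k}.ncard + 1 :=
        Nat.add_le_add_right (Set.ncard_image_le hfin) 1
    _ = 1 + ∑ i ∈ Finset.range (k + 1), Aᶜ.ncard.choose i := by
        rw [ncard_powerset_ncard_le_s7 hA, add_comm]

end

theorem complement_degenerate_cut_nbhds {V : Type*} [Fintype V] [LinearOrder V]
    (G : SimpleGraph V) (k : ℕ)
    (hdeg : ∀ v : V, ({w : V | v < w ∧ ¬ G.Adj v w}).ncard ≤ k)
    (A : Set V) (hinit : ∀ a ∈ A, ∀ b : V, b ≤ a → b ∈ A) :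
    (cutNbhdFamily G A).ncard ≤
      1 + ∑ i ∈ Finset.range (k + 1), (Fintype.card V).choose i := by
  have hA : IsLowerSet A := fun a b hba ha ↦ hinit a ha b hba
  have hcard : Aᶜ.ncard ≤ Fintype.card V := by simpa using Set.ncard_le_card Aᶜ
  exact (complement_degenerate_cut_nbhds_general Aᶜ.toFinite fun a ha ↦ (Set.ncard_le_ncard
    (compl_sdiff_neighborSet_subset_of_isLowerSet hA ha)).trans (hdeg a)).trans (by gcongr)
end
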